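/- Let g_1,…,g_m ∈ ℝ[x] with g_m = R − ‖x‖₂² for some R > 0, and let f ∈ ℝ[x]. Then for every integer k ≥ max{⌈f⌉, ⌈g_1⌉,…,⌈g_m⌉} there exist a real ξ and symmetric positive definite matrices G_0 (indexed by ℕ^n_k) and G_i (indexed by ℕ^n_{k-⌈g_i⌉}), i ∈ {1,…,m}, such that f − ξ = v_k^T G_0 v_k + Σ_{i=1}^m g_i · v_{k-⌈g_i⌉}^T G_i v_{k-⌈g_i⌉} holds in ℝ[x]. (That is, the SOS relaxation of order k admits a strictly feasible solution, i.e. Slater's condition holds.) -/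

import Mathlib

open MvPolynomial

/-- `⌈p⌉ := ⌈deg(p)/2⌉`. -/
noncomputable def halfCeil {n : ℕ} (p : MvPolynomial (Fin n) ℝ) : ℕ :=
  (p.totalDegree + 1) / 2

/-- The finite set `ℕ^n_d` of multi-indices `α ∈ ℕ^n` with `|α| ≤ d`. -/
noncomputable def degLE (n d : ℕ) : Finset (Fin n →₀ ℕ) :=
  (Finset.Iic (Finsupp.equivFunOnFinite.symm fun _ : Fin n => d)).filter
    fun α => (∑ i, α i) ≤ d

/-- The polynomial `v_d^T G v_d = Σ_{α,β ∈ ℕ^n_d} G_{α,β} x^{α+β}` associated with a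
matrix `G` indexed by `ℕ^n_d`. -/
noncomputable def quadForm (n d : ℕ)
    (G : Matrix ↥(degLE n d) ↥(degLE n d) ℝ) : MvPolynomial (Fin n) ℝ :=
  ∑ α : ↥(degLE n d), ∑ β : ↥(degLE n d), monomial (α.1 + β.1) (G α β)

/-- The moment matrix `M_d(y)`, with entries `(M_d(y))_{α,β} = y_{α+β}`. -/
noncomputable def momentMat (n d : ℕ) (y : (Fin n →₀ ℕ) → ℝ) :
    Matrix ↥(degLE n d) ↥(degLE n d) ℝ :=
  Matrix.of fun α β => y (α.1 + β.1)

/-- The localizing matrix `M_d(q·y)`, with entries `Σ_γ q_γ y_{α+β+γ}`. -/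
noncomputable def locMat (n d : ℕ) (q : MvPolynomial (Fin n) ℝ)
    (y : (Fin n →₀ ℕ) → ℝ) : Matrix ↥(degLE n d) ↥(degLE n d) ℝ :=
  Matrix.of fun α β => ∑ γ ∈ q.support, coeff γ q * y (α.1 + β.1 + γ)

/-!
Fix all Gram matrices but `G_0` and that of the ball constraint to be the identity, and move the
corresponding terms into `f`; this leaves a polynomial `p` of degree at most `2k`, which has a
symmetric Gram matrix `H`. If `q = ∑_{|α| ≤ k-1} d_α x^{2α}` with positive weights `d_α` decaying
fast in `|α|`, then every coefficient of `(‖x‖² - R) q = ∑_β c_β x^{2β}` other than `c_0` is as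
large as we like. Hence `p - (R - ‖x‖²) q - ξ` has the Gram matrix `H + diag(c)` with `c_0` replaced
by `c_0 - ξ`, and this is positive definite as soon as `ξ` makes that entry large as well.
-/

theorem mem_degLE {n d : ℕ} {α : Fin n →₀ ℕ} : α ∈ degLE n d ↔ α.degree ≤ d := by
  simp only [degLE, Finset.mem_filter, Finset.mem_Iic, ← Finsupp.degree_eq_sum,
    and_iff_right_iff_imp]
  exact fun h i => (Finsupp.le_degree i α).trans h

theorem degree_sub_single_add_one {σ : Type*} {β : σ →₀ ℕ} {i : σ} (hi : i ∈ β.support) :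
    (β - Finsupp.single i 1).degree + 1 = β.degree := by
  conv_rhs => rw [← Finsupp.sub_add_single_one_cancel (Finsupp.mem_support_iff.1 hi)]
  simp

theorem totalDegree_le_two_mul_halfCeil {n : ℕ} (p : MvPolynomial (Fin n) ℝ) :
    p.totalDegree ≤ 2 * halfCeil p := by
  unfold halfCeil
  omega

/-- `quadForm` as a linear map in the Gram matrix. -/
noncomputable def quadFormLin (n d : ℕ) :
    Matrix ↥(degLE n d) ↥(degLE n d) ℝ →ₗ[ℝ] MvPolynomial (Fin n) ℝ where
  toFun := quadForm n d
  map_add' A B := by simp [quadForm, Finset.sum_add_distrib]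
  map_smul' c A := by simp [quadForm, Finset.smul_sum, smul_monomial]

section Gram

variable {n d : ℕ}

theorem quadFormLin_apply (G : Matrix ↥(degLE n d) ↥(degLE n d) ℝ) :
    quadFormLin n d G = quadForm n d G :=
  rfl

theorem quadForm_transpose (G : Matrix ↥(degLE n d) ↥(degLE n d) ℝ) :
    quadForm n d G.transpose = quadForm n d G := by
  simp only [quadForm, Matrix.transpose_apply]
  rw [Finset.sum_comm]
  simp only [add_comm]

theorem quadForm_single (α β : ↥(degLE n d)) (c : ℝ) :
    quadForm n d (Matrix.single α β c) = monomial (α.1 + β.1) c := by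
  simp [quadForm, Matrix.single_apply, ite_and, apply_ite (monomial _)]

theorem exists_degLE_add_eq {γ : Fin n →₀ ℕ} (hγ : γ.degree ≤ 2 * d) :
    ∃ α β : ↥(degLE n d), α.1 + β.1 = γ := by
  obtain ⟨α, hαγ, hα⟩ := Finsupp.exists_le_degree_eq γ _ (min_le_right d γ.degree)
  obtain ⟨β, rfl⟩ := exists_add_of_le hαγ
  rw [map_add] at hγ hα
  exact ⟨⟨α, mem_degLE.2 (by omega)⟩, ⟨β, mem_degLE.2 (by omega)⟩, rfl⟩

theorem range_quadFormLin (n d : ℕ) :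
    LinearMap.range (quadFormLin n d) = restrictTotalDegree (Fin n) ℝ (2 * d) := by
  apply le_antisymm
  · rintro _ ⟨G, rfl⟩
    refine Submodule.sum_mem _ fun α _ => Submodule.sum_mem _ fun β _ => ?_
    rw [mem_restrictTotalDegree]
    have hα := mem_degLE.1 α.2
    have hβ := mem_degLE.1 β.2
    calc (monomial (α.1 + β.1) (G α β)).totalDegree
        ≤ (α.1 + β.1).degree := totalDegree_monomial_le _ _
      _ ≤ 2 * d := by rw [map_add]; omega
  · rw [restrictTotalDegree, restrictSupport_eq_span, Submodule.span_le]
    rintro _ ⟨γ, hγ, rfl⟩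
    obtain ⟨α, β, rfl⟩ := exists_degLE_add_eq hγ
    exact ⟨Matrix.single α β 1, quadForm_single α β 1⟩

theorem totalDegree_quadForm_le (G : Matrix ↥(degLE n d) ↥(degLE n d) ℝ) :
    (quadForm n d G).totalDegree ≤ 2 * d := by
  rw [← mem_restrictTotalDegree, ← range_quadFormLin]
  exact ⟨G, rfl⟩

theorem exists_isHermitian_quadForm_eq {p : MvPolynomial (Fin n) ℝ} (hp : p.totalDegree ≤ 2 * d) :
    ∃ H : Matrix ↥(degLE n d) ↥(degLE n d) ℝ, H.IsHermitian ∧ quadForm n d H = p := by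
  rw [← mem_restrictTotalDegree, ← range_quadFormLin] at hp
  obtain ⟨G, rfl⟩ := hp
  refine ⟨(2⁻¹ : ℝ) • (G + G.transpose), ?_, ?_⟩
  · simp [Matrix.IsHermitian, Matrix.conjTranspose_eq_transpose_of_trivial, add_comm]
  · rw [← quadFormLin_apply, map_smul, map_add, quadFormLin_apply G.transpose, quadForm_transpose,
      ← quadFormLin_apply, ← two_smul ℝ, inv_smul_smul₀ two_ne_zero]

end Gram

open scoped ComplexOrder in
theorem eventually_posDef_add_smul_one {𝕜 ι : Type*} [RCLike 𝕜] [Finite ι] [DecidableEq ι]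
    {A : Matrix ι ι 𝕜} (hA : A.IsHermitian) :
    ∀ᶠ t : ℝ in Filter.atTop, (A + t • (1 : Matrix ι ι 𝕜)).PosDef := by
  have := Fintype.ofFinite ι
  obtain ⟨b, hb⟩ := A.finite_real_spectrum.bddBelow
  filter_upwards [Filter.eventually_gt_atTop (-b)] with t ht
  have hAt : (A + t • (1 : Matrix ι ι 𝕜)).IsHermitian :=
    hA.add (by simp [Matrix.IsHermitian])
  rw [hAt.posDef_iff_eigenvalues_pos]
  intro i
  have hmem := hAt.eigenvalues_mem_spectrum_real i
  have hshift : hAt.eigenvalues i - t ∈ spectrum ℝ A := by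
    rwa [← spectrum.add_mem_add_iff (s := t), sub_add_cancel, add_comm,
      Algebra.algebraMap_eq_smul_one]
  linarith [hb hshift]

/-- The polynomial `∑_{α ∈ ℕ^n_d} c_α x^{2α}`, i.e. `v_d^T (diag c) v_d`, as a linear map in the
weights `c`, which are indexed by all of `ℕ^n` so that `d` may vary. -/
noncomputable def diagForm (n d : ℕ) : ((Fin n →₀ ℕ) → ℝ) →ₗ[ℝ] MvPolynomial (Fin n) ℝ :=
  ∑ α ∈ degLE n d, monomial (α + α) ∘ₗ LinearMap.proj α

/-- The polynomials `v_d^T G v_d` with a positive definite Gram matrix `G`: the sums of squares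
that may occur in a strictly feasible solution. -/
def IsPosDefForm (n d : ℕ) (p : MvPolynomial (Fin n) ℝ) : Prop :=
  ∃ G : Matrix ↥(degLE n d) ↥(degLE n d) ℝ, G.PosDef ∧ quadForm n d G = p

section Diagonal

variable {n d : ℕ}

theorem diagForm_apply (c : (Fin n →₀ ℕ) → ℝ) :
    diagForm n d c = ∑ α ∈ degLE n d, monomial (α + α) (c α) := by
  simp [diagForm]

theorem quadForm_diagonal (c : (Fin n →₀ ℕ) → ℝ) :
    quadForm n d (Matrix.diagonal fun α => c α.1) = diagForm n d c := by
  rw [diagForm_apply, ← Finset.sum_coe_sort]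
  simp [quadForm, Matrix.diagonal_apply, apply_ite (monomial _)]

theorem diagForm_single_zero (a : ℝ) : diagForm n d (Pi.single 0 a) = C a := by
  rw [diagForm_apply, Finset.sum_eq_single_of_mem 0 (mem_degLE.2 (by simp))]
  · simp
  · intro α _ hα
    simp [hα]

theorem isPosDefForm_diagForm {c : (Fin n →₀ ℕ) → ℝ} (hc : ∀ α ∈ degLE n d, 0 < c α) :
    IsPosDefForm n d (diagForm n d c) :=
  ⟨_, Matrix.PosDef.diagonal fun α => hc α.1 α.2, quadForm_diagonal c⟩

theorem eventually_isPosDefForm_add_diagForm {p : MvPolynomial (Fin n) ℝ}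
    (hp : p.totalDegree ≤ 2 * d) :
    ∀ᶠ N : ℝ in Filter.atTop, ∀ c : (Fin n →₀ ℕ) → ℝ, (∀ α ∈ degLE n d, N ≤ c α) →
      IsPosDefForm n d (p + diagForm n d c) := by
  obtain ⟨H, hH, rfl⟩ := exists_isHermitian_quadForm_eq hp
  filter_upwards [eventually_posDef_add_smul_one hH] with N hN c hc
  have hdiag : (Matrix.diagonal fun α : ↥(degLE n d) => c α.1 - N).PosSemidef :=
    Matrix.PosSemidef.diagonal fun α => sub_nonneg.2 (hc α.1 α.2)
  refine ⟨_, hN.add_posSemidef hdiag, ?_⟩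
  have hsum : H + N • 1 + Matrix.diagonal (fun α : ↥(degLE n d) => c α.1 - N)
      = H + Matrix.diagonal fun α => c α.1 := by
    rw [Matrix.smul_one_eq_diagonal, add_assoc, Matrix.diagonal_add]
    simp
  rw [hsum, ← quadFormLin_apply, map_add, quadFormLin_apply, quadFormLin_apply, quadForm_diagonal]

end Diagonal

section Ball

variable {n : ℕ}

theorem halfCeil_C_sub_sum_X_sq [NeZero n] (R : ℝ) :
    halfCeil (C R - ∑ i : Fin n, X i ^ 2) = 1 := by
  have hle : (C R - ∑ i : Fin n, X i ^ 2).totalDegree ≤ 2 := by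
    refine (totalDegree_sub _ _).trans (max_le (by simp) (totalDegree_finsetSum_le fun i _ => ?_))
    simp
  have hcoeff : coeff (Finsupp.single 0 2) (C R - ∑ i : Fin n, X i ^ 2) = -1 := by
    simp [coeff_sum, coeff_X_pow, coeff_C, Finsupp.single_left_inj, eq_comm (a := (0 : Fin n →₀ ℕ))]
  have hge : 2 ≤ (C R - ∑ i : Fin n, X i ^ 2).totalDegree := by
    simpa using le_totalDegree (mem_support_iff.2 (hcoeff.trans_ne (by norm_num)))
  unfold halfCeil
  omega

theorem C_mul_diagForm (a : ℝ) (s : ℕ) (c : (Fin n →₀ ℕ) → ℝ) :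
    C a * diagForm n s c
      = diagForm n (s + 1) fun β => if β.degree ≤ s then a * c β else 0 := by
  have hfilter : (degLE n (s + 1)).filter (fun β => β.degree ≤ s) = degLE n s := by
    ext β
    simp only [Finset.mem_filter, mem_degLE]
    omega
  simp only [diagForm_apply, Finset.mul_sum, C_mul_monomial, apply_ite (monomial _), map_zero,
    ← Finset.sum_filter, hfilter]

theorem sum_X_sq_mul_diagForm (s : ℕ) (c : (Fin n →₀ ℕ) → ℝ) :
    (∑ i, X i ^ 2) * diagForm n s c
      = diagForm n (s + 1) fun β => ∑ i ∈ β.support, c (β - Finsupp.single i 1) := by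
  simp only [diagForm_apply, Finset.mul_sum, Finset.sum_mul, map_sum]
  rw [← Finset.sum_product', Finset.sum_sigma']
  refine Finset.sum_bij' (fun q _ => ⟨q.1 + Finsupp.single q.2 1, q.2⟩)
    (fun q _ => (q.1 - Finsupp.single q.2 1, q.2)) ?_ ?_ ?_ ?_ ?_
  · rintro ⟨α, i⟩ hα
    simp_all [mem_degLE]
  · rintro ⟨β, i⟩ hβ
    simp only [Finset.mem_sigma, Finset.mem_product, mem_degLE, Finset.mem_univ, and_true] at hβ ⊢
    have hdeg := degree_sub_single_add_one hβ.2
    omega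
  · rintro ⟨α, i⟩ -
    simp
  · rintro ⟨β, i⟩ hβ
    simp [Finsupp.sub_add_single_one_cancel (Finsupp.mem_support_iff.1 (Finset.mem_sigma.1 hβ).2)]
  · rintro ⟨α, i⟩ -
    rw [X_pow_eq_monomial, monomial_mul, one_mul, add_tsub_cancel_right, ← one_add_one_eq_two,
      Finsupp.single_add, add_add_add_comm, add_comm (Finsupp.single i 1)]

theorem exists_ball_mul_diagForm_eq_neg (R : ℝ) (s : ℕ) {N : ℝ} (hN : 0 < N) :
    ∃ d c : (Fin n →₀ ℕ) → ℝ, (∀ α, 0 < d α) ∧ (∀ β ∈ degLE n (s + 1), β ≠ 0 → N ≤ c β) ∧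
      (C R - ∑ i, X i ^ 2) * diagForm n s d = -diagForm n (s + 1) c := by
  -- The coefficient of `x^{2β}` is `R d_β - ∑_{i ∈ supp β} d_{β - e_i}`, so it is very negative
  -- once `d` decays fast enough in the degree.
  set d : (Fin n →₀ ℕ) → ℝ := fun α => N * (1 + |R|) ^ (s + 1 - α.degree) with hd
  have hdpos (α) : 0 < d α := by positivity
  refine ⟨d, (fun β => ∑ i ∈ β.support, d (β - Finsupp.single i 1))
    - fun β => if β.degree ≤ s then R * d β else 0, hdpos, fun β hβ hβ0 => ?_, ?_⟩
  · obtain ⟨i, hi⟩ := Finsupp.support_nonempty_iff.2 hβ0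
    have hsum : d (β - Finsupp.single i 1) ≤ ∑ j ∈ β.support, d (β - Finsupp.single j 1) :=
      Finset.single_le_sum (f := fun j => d (β - Finsupp.single j 1)) (fun j _ => (hdpos _).le) hi
    have hR : (if β.degree ≤ s then R * d β else 0) ≤ |R| * d β := by
      split_ifs
      · exact mul_le_mul_of_nonneg_right (le_abs_self R) (hdpos β).le
      · exact mul_nonneg (abs_nonneg R) (hdpos β).le
    have hdecay : d (β - Finsupp.single i 1) = (1 + |R|) * d β := by
      have hexp : s + 1 - (β - Finsupp.single i 1).degree = s + 1 - β.degree + 1 := by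
        have hβd := mem_degLE.1 hβ
        have hdeg := degree_sub_single_add_one hi
        omega
      simp only [hd, hexp, pow_succ]
      ring
    have hdN : N ≤ d β := le_mul_of_one_le_right hN.le (one_le_pow₀ (by simp))
    rw [Pi.sub_apply]
    linarith
  · rw [sub_mul, C_mul_diagForm, sum_X_sq_mul_diagForm, map_sub, neg_sub]

theorem exists_isPosDefForm_sub_ball_mul {p : MvPolynomial (Fin n) ℝ} {k : ℕ} (R : ℝ)
    (hk : halfCeil (C R - ∑ i : Fin n, X i ^ 2) ≤ k) (hp : p.totalDegree ≤ 2 * k) :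
    ∃ ξ : ℝ, ∃ q, IsPosDefForm n (k - halfCeil (C R - ∑ i : Fin n, X i ^ 2)) q ∧
      IsPosDefForm n k (p - C ξ - (C R - ∑ i, X i ^ 2) * q) := by
  rcases eq_or_ne n 0 with rfl | hn
  · have hone (d : ℕ) : IsPosDefForm 0 d (diagForm 0 d 1) := isPosDefForm_diagForm (by simp)
    set q := diagForm 0 (k - halfCeil (C R - ∑ i : Fin 0, X i ^ 2)) 1
    set r := p - (C R - ∑ i, X i ^ 2) * q - diagForm 0 k 1
    refine ⟨coeff 0 r, q, hone _, ?_⟩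
    convert hone k using 1
    rw [← eq_C_of_isEmpty r]
    ring
  · have := NeZero.mk hn
    rw [halfCeil_C_sub_sum_X_sq] at hk ⊢
    obtain ⟨s, rfl⟩ := Nat.exists_eq_add_of_le' hk
    obtain ⟨N, hpos, hN⟩ :=
      ((Filter.eventually_gt_atTop 0).and (eventually_isPosDefForm_add_diagForm hp)).exists
    obtain ⟨d, c, hd, hc, hdc⟩ := exists_ball_mul_diagForm_eq_neg (n := n) R s hpos
    refine ⟨c 0 - N, diagForm n s d, isPosDefForm_diagForm fun α _ => hd α, ?_⟩
    rw [hdc]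
    convert hN (c - Pi.single 0 (c 0 - N)) fun β hβ => ?_ using 1
    · rw [map_sub (diagForm _ _), diagForm_single_zero]
      ring
    · rcases eq_or_ne β 0 with rfl | hβ0
      · simp
      · simpa [hβ0] using hc β hβ hβ0

end Ball

theorem stmt4_general {n : ℕ} {ι : Type*} [Fintype ι] (g : ι → MvPolynomial (Fin n) ℝ) (i₀ : ι)
    (R : ℝ) (hball : g i₀ = C R - ∑ i, X i ^ 2) (f : MvPolynomial (Fin n) ℝ) (k : ℕ)
    (hf : halfCeil f ≤ k) (hg : ∀ i, halfCeil (g i) ≤ k) :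
    ∃ ξ : ℝ,
    ∃ G0 : Matrix ↥(degLE n k) ↥(degLE n k) ℝ, G0.PosDef ∧
    ∃ G : ∀ i, Matrix ↥(degLE n (k - halfCeil (g i))) ↥(degLE n (k - halfCeil (g i))) ℝ,
      (∀ i, (G i).PosDef) ∧
      f - C ξ = quadForm n k G0 + ∑ i, g i * quadForm n (k - halfCeil (g i)) (G i) := by
  classical
  set p := f - ∑ i ∈ Finset.univ.erase i₀, g i * quadForm n (k - halfCeil (g i)) 1 with hp
  have hdeg : p.totalDegree ≤ 2 * k := by
    have hf' := totalDegree_le_two_mul_halfCeil f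
    refine (totalDegree_sub _ _).trans (max_le (by omega) (totalDegree_finsetSum_le fun i _ => ?_))
    have hgi := totalDegree_le_two_mul_halfCeil (g i)
    have hqi := totalDegree_quadForm_le (n := n) (d := k - halfCeil (g i)) 1
    have hik := hg i
    exact (totalDegree_mul _ _).trans (by omega)
  obtain ⟨ξ, q, hq, G₀, hG₀, h⟩ :=
    exists_isPosDefForm_sub_ball_mul R (hball ▸ hg i₀) hdeg
  rw [← hball] at hq h
  obtain ⟨Q, hQ, rfl⟩ := hq
  refine ⟨ξ, G₀, hG₀, Function.update (fun _ => 1) i₀ Q, ?_, ?_⟩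
  · exact (Function.forall_update_iff _ fun _ => Matrix.PosDef).2 ⟨hQ, fun _ _ => .one⟩
  · rw [← Finset.add_sum_erase _ _ (Finset.mem_univ i₀), Function.update_self,
      Finset.sum_congr rfl fun i hi => by rw [Function.update_of_ne (Finset.ne_of_mem_erase hi)],
      h, hp]
    ring

/-- If a ball constraint `g_m = R − ‖x‖₂²` (`R > 0`) is present, then for every
`k ≥ max{⌈f⌉, ⌈g_i⌉}` there exist `ξ ∈ ℝ` and symmetric positive definite matrices `G_0`
(indexed by `ℕ^n_k`) and `G_i` (indexed by `ℕ^n_{k-⌈g_i⌉}`) with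
`f − ξ = v_k^T G_0 v_k + Σ_i g_i · v_{k-⌈g_i⌉}^T G_i v_{k-⌈g_i⌉}`, i.e. the order-`k` SOS
relaxation has a strictly feasible solution (Slater's condition). -/
theorem stmt4 (n m : ℕ) (g : Fin (m + 1) → MvPolynomial (Fin n) ℝ) (R : ℝ) (hR : 0 < R)
    (hball : g (Fin.last m) = C R - ∑ i, X i ^ 2)
    (f : MvPolynomial (Fin n) ℝ) :
    ∀ k : ℕ, halfCeil f ≤ k → (∀ i, halfCeil (g i) ≤ k) →
      ∃ ξ : ℝ,
      ∃ G0 : Matrix ↥(degLE n k) ↥(degLE n k) ℝ, G0.PosDef ∧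
      ∃ G : ∀ i : Fin (m + 1),
          Matrix ↥(degLE n (k - halfCeil (g i))) ↥(degLE n (k - halfCeil (g i))) ℝ,
        (∀ i, (G i).PosDef) ∧
        f - C ξ
          = quadForm n k G0 + ∑ i, g i * quadForm n (k - halfCeil (g i)) (G i) := by
  intro k hf hg
  exact stmt4_general g (Fin.last m) R hball f k hf hg
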